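/- Let p ≡ 1 (mod 4) be prime, let p divide n, let Q_p ⊆ {1, …, p−1} be the set of nonzero quadratic residues modulo p, and let a, b, c be integers coprime to p with Legendre symbols (a|p) = −(c|p). Let X = {((aq+b)·(n/p) + 1) mod n : q ∈ Q_p} ∪ {((cq−b)·(n/p) − 1) mod n : q ∈ Q_p}, and assume these p−1 elements of ℤ/nℤ are distinct. Then for every y ∈ ℤ/nℤ whose integer representative ỹ is NOT divisible by p, one has σ_X(y) = (aỹ|p)·i·√p·sin(2πθ_y) − cos(2πθ_y), where θ_y = (bn+p)ỹ/(pn); in particular, (Re σ_X(y))² + (Im σ_X(y))²/p = 1, i.e., σ_X(y) lies on the ellipse (Re z)² + (Im z)²/p = 1. -/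

import Mathlib

open Complex

/-- `e(θ) = exp(2πiθ)`. -/
noncomputable def e2 (θ : ℝ) : ℂ := Complex.exp (2 * Real.pi * Complex.I * θ)

/-- The cyclic supercharacter attached to a subset `X` of `ℤ/nℤ`:
`σ_X(y) = Σ_{x ∈ X} e(xy/n)`. -/
noncomputable def superchar (n : ℕ) (X : Set (ZMod n)) (y : ZMod n) : ℂ :=
  ∑ᶠ x ∈ X, e2 (((x.val * y.val : ℕ) : ℝ) / (n : ℝ))

/-- The orbit `Ar = {ar : a ∈ A}` of `r` under a unit subgroup `A`. -/
def unitOrbit (n : ℕ) (A : Subgroup (ZMod n)ˣ) (r : ZMod n) : Set (ZMod n) :=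
  (fun a : (ZMod n)ˣ => (a : ZMod n) * r) '' (A : Set (ZMod n)ˣ)

/-!
Each half of `X` is an affine image of the nonzero squares modulo `p`, so `σ_X(y)` is a combination
of two quadratic Gauss sums with phases `exp (iθ)` and `exp (-iθ)`; because `(a|p) = -(c|p)`, the
two halves add up to `i√p sin θ` up to the sign `(aỹ|p)`, minus `cos θ`.

The value of the Gauss sum, sign included, follows Gauss: the product
`∏ (ζ ^ j - ζ ^ (-j))` over odd `j < p` has the same square, and the remaining sign is detected
modulo a power of the prime `ζ - 1`. At `ζ = exp (2πi/p)` the product is visibly positive when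
`p ≡ 1 (mod 4)`.
-/

section Products

lemma factorial_mul_prod_range_four_mul_add_two (m : ℕ) :
    m.factorial * ∏ k ∈ Finset.range m, (4 * k + 2) = (2 * m).factorial := by
  induction m with
  | zero => simp
  | succ m ih =>
    rw [Finset.prod_range_succ, mul_add_one, Nat.factorial_succ, Nat.factorial_succ,
      Nat.factorial_succ, ← ih]
    ring

lemma prod_range_two_mul {M : Type*} [CommMonoid M] (f : ℕ → M) (m : ℕ) :
    ∏ i ∈ Finset.range (2 * m), f i = ∏ k ∈ Finset.range m, f (2 * k) * f (2 * k + 1) := by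
  induction m with
  | zero => simp
  | succ m ih =>
    rw [mul_add_one, Finset.prod_range_succ, Finset.prod_range_succ, Finset.prod_range_succ, ih,
      mul_assoc]

lemma prod_range_two_mul_eq_prod_odd_mul_reflect {M : Type*} [CommMonoid M] (f : ℕ → M) (m : ℕ) :
    ∏ i ∈ Finset.range (2 * m), f (i + 1)
      = ∏ k ∈ Finset.range m, f (2 * k + 1) * f (2 * m + 1 - (2 * k + 1)) := by
  rw [prod_range_two_mul, Finset.prod_mul_distrib, Finset.prod_mul_distrib,
    ← Finset.prod_range_reflect (fun k => f (2 * k + 1 + 1))]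
  congr 1
  refine Finset.prod_congr rfl fun k hk => congrArg f ?_
  have := Finset.mem_range.mp hk
  omega

end Products

section Polynomials

open Polynomial

lemma coeff_card_prod_of_coeff_zero_eq_zero {R ι : Type*} [CommSemiring R] (s : Finset ι)
    (f : ι → R[X]) (hf : ∀ i ∈ s, (f i).coeff 0 = 0) :
    (∏ i ∈ s, f i).coeff s.card = ∏ i ∈ s, (f i).coeff 1 := by
  have hX : ∀ i ∈ s, f i = X * (f i).divX := fun i hi => by
    simpa only [hf i hi, C_0, add_zero] using ((f i).X_mul_divX_add).symm
  rw [Finset.prod_congr rfl hX, Finset.prod_mul_distrib, Finset.prod_const, coeff_X_pow_mul',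
    if_pos le_rfl, Nat.sub_self, coeff_zero_prod]
  simp only [coeff_divX, zero_add]

lemma coeff_card_taylor_one_prod_X_pow_sub_X_pow {R ι : Type*} [CommRing R] (s : Finset ι)
    (a b : ι → ℕ) :
    (taylor 1 (∏ i ∈ s, (X ^ a i - X ^ b i : R[X]))).coeff s.card
      = ∏ i ∈ s, ((a i : R) - (b i : R)) := by
  have htaylor : taylor 1 (∏ i ∈ s, (X ^ a i - X ^ b i : R[X]))
      = ∏ i ∈ s, taylor 1 (X ^ a i - X ^ b i) := map_prod (taylorAlgHom 1) _ _
  rw [htaylor, coeff_card_prod_of_coeff_zero_eq_zero]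
  · refine Finset.prod_congr rfl fun i _ => ?_
    rw [taylor_coeff_one]
    simp [derivative_X_pow]
  · intro i _
    rw [taylor_coeff_zero]
    simp

lemma sum_eval_of_monic_of_natDegree_eq_card_sub_one {K : Type*} [Field K] [Fintype K] {P : K[X]}
    (hP : P.Monic) (hdeg : P.natDegree = Fintype.card K - 1) : ∑ x, P.eval x = -1 := by
  classical
  have hq : Fintype.card K - 1 ≠ 0 := (Nat.sub_pos_of_lt Fintype.one_lt_card).ne'
  have hlow : ∀ i ∈ Finset.range (Fintype.card K - 1), ∑ x, P.coeff i * x ^ i = 0 := fun i hi => by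
    rw [← Finset.mul_sum, FiniteField.sum_pow_lt_card_sub_one K i (Finset.mem_range.mp hi),
      mul_zero]
  have hpow : ∀ x : K, x ^ (Fintype.card K - 1) = 1 - if x = 0 then 1 else 0 := fun x => by
    split_ifs with hx
    · rw [hx, zero_pow hq, sub_self]
    · rw [FiniteField.pow_card_sub_one_eq_one x hx, sub_zero]
  simp_rw [eval_eq_sum_range, hdeg]
  rw [Finset.sum_comm, Finset.sum_range_succ, Finset.sum_eq_zero hlow, ← hdeg,
    hP.coeff_natDegree, hdeg]
  simp [hpow]

variable {p : ℕ} [Fact p.Prime]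

lemma factorial_mul_coeff_taylor_one_sum_C_mul_X_pow_val
    (f : ZMod p → ZMod p) (m : ℕ) :
    (m.factorial : ZMod p) * (taylor 1 (∑ x, C (f x) * X ^ x.val)).coeff m
      = ∑ x, f x * (descPochhammer (ZMod p) m).eval x := by
  rw [map_sum, finsetSum_coeff, Finset.mul_sum]
  refine Finset.sum_congr rfl fun x _ => ?_
  have hx : (descPochhammer (ZMod p) m).eval x = m.factorial * (x.val.choose m : ZMod p) := by
    rw [← Nat.cast_mul, ← Nat.descFactorial_eq_factorial_mul_choose,
      ← descPochhammer_eval_eq_descFactorial, ZMod.natCast_zmod_val]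
  rw [taylor_mul, taylor_C, taylor_X_pow, coeff_C_mul, C_1, coeff_X_add_one_pow, hx]
  ring

lemma factorial_mul_coeff_taylor_one_sum_pow_half (hp : p ≠ 2) :
    ((p / 2).factorial : ZMod p)
      * (taylor 1 (∑ x : ZMod p, C (x ^ (p / 2)) * X ^ x.val)).coeff (p / 2) = -1 := by
  have hpodd := (Fact.out : p.Prime).odd_of_ne_two hp
  have hmonic := (monic_X_pow (R := ZMod p) (p / 2)).mul (monic_descPochhammer (ZMod p) (p / 2))
  rw [factorial_mul_coeff_taylor_one_sum_C_mul_X_pow_val,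
    ← sum_eval_of_monic_of_natDegree_eq_card_sub_one hmonic]
  · simp only [eval_mul, eval_pow, eval_X]
  · rw [(monic_X_pow (p / 2)).natDegree_mul (monic_descPochhammer (ZMod p) (p / 2)),
      natDegree_X_pow, descPochhammer_natDegree, ZMod.card]
    have := Nat.two_mul_div_two_add_one_of_odd hpodd
    omega

lemma factorial_mul_prod_range_half (hp : p ≠ 2) :
    ((p / 2).factorial : ZMod p)
      * ∏ k ∈ Finset.range (p / 2), (((2 * k + 1 : ℕ) : ZMod p) - (p - (2 * k + 1) : ℕ)) = -1 := by
  have hpodd := (Fact.out : p.Prime).odd_of_ne_two hp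
  have hfactor : ∀ k ∈ Finset.range (p / 2),
      ((2 * k + 1 : ℕ) : ZMod p) - (p - (2 * k + 1) : ℕ) = (4 * k + 2 : ℕ) := fun k hk => by
    have := Finset.mem_range.mp hk
    rw [Nat.cast_sub (by omega), ZMod.natCast_self]
    push_cast
    ring
  rw [Finset.prod_congr rfl hfactor, ← Nat.cast_prod, ← Nat.cast_mul,
    factorial_mul_prod_range_four_mul_add_two, ← ZMod.wilsons_lemma p]
  have := Nat.two_mul_div_two_add_one_of_odd hpodd
  congr 2
  omega

-- `p` is totally ramified in `ℤ[ζ]`: modulo `p`, its minimal polynomial is `(X - 1) ^ (p - 1)`.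
lemma coeff_taylor_one_map_eq_zero_of_aeval_eq_zero {K : Type*} [Field K] [CharZero K] {ζ : K}
    (hζ : IsPrimitiveRoot ζ p) {f : ℤ[X]} (hf : aeval ζ f = 0) {k : ℕ} (hk : k < p - 1) :
    (taylor 1 (f.map (Int.castRingHom (ZMod p)))).coeff k = 0 := by
  have hp : p.Prime := Fact.out
  have hcyc : cyclotomic p (ZMod p) = (X - 1) ^ (p - 1) := by
    simpa only [one_mul, cyclotomic_one] using
      cyclotomic_mul_prime_eq_pow_of_not_dvd (ZMod p) (p := p) (n := 1) hp.not_dvd_one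
  have hdvd : cyclotomic p ℤ ∣ f := by
    rw [cyclotomic_eq_minpoly hζ hp.pos]
    exact minpoly.isIntegrallyClosed_dvd (hζ.isIntegral hp.pos) hf
  obtain ⟨g, hg⟩ : (X - 1) ^ (p - 1) ∣ f.map (Int.castRingHom (ZMod p)) := by
    rw [← hcyc, ← map_cyclotomic p (Int.castRingHom (ZMod p))]
    exact Polynomial.map_dvd _ hdvd
  have hX : taylor 1 (X - 1 : (ZMod p)[X]) = X := by
    rw [map_sub, taylor_X, taylor_one, add_sub_cancel_right]
  rw [hg, taylor_mul, taylor_pow, hX, coeff_X_pow_mul', if_neg (not_le.mpr hk)]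

end Polynomials

section GaussSum

/-- The Legendre symbol modulo `p` as a multiplicative character with values in `R`. -/
noncomputable def legendreChar (p : ℕ) [Fact p.Prime] (R : Type*) [CommRing R] :
    MulChar (ZMod p) R :=
  (quadraticChar (ZMod p)).ringHomComp (Int.castRingHom R)

/-- Gauss's product `∏ (ζ ^ j - ζ ^ (-j))` over the odd `j` below `p`. For a primitive `p`-th root
of unity `ζ` its square is that of the quadratic Gauss sum, and its sign can be read off. -/
noncomputable def gaussProd (p : ℕ) {K : Type*} [Field K] (ζ : K) : K :=
  ∏ k ∈ Finset.range (p / 2), (ζ ^ (2 * k + 1) - ζ⁻¹ ^ (2 * k + 1))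

variable {p : ℕ} [Fact p.Prime]

lemma legendreChar_intCast (R : Type*) [CommRing R] (k : ℤ) :
    legendreChar p R k = (legendreSym p k : R) := rfl

lemma legendreChar_isQuadratic (R : Type*) [CommRing R] : (legendreChar p R).IsQuadratic :=
  (quadraticChar_isQuadratic (ZMod p)).comp _

lemma legendreChar_ne_one {R : Type*} [CommRing R] [CharZero R] (hp : p ≠ 2) :
    legendreChar p R ≠ 1 :=
  (MulChar.ringHomComp_ne_one_iff Int.cast_injective).mpr
    (quadraticChar_ne_one (by rwa [ZMod.ringChar_zmod_n]))

lemma legendreChar_neg_one {R : Type*} [CommRing R] (hp : p ≠ 2) :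
    legendreChar p R (-1) = (-1) ^ (p / 2) := by
  have hpodd := Nat.odd_iff.mp ((Fact.out : p.Prime).odd_of_ne_two hp)
  have h := legendreChar_intCast (p := p) R (-1)
  rw [legendreSym.at_neg_one hp, ZMod.χ₄_eq_neg_one_pow hpodd] at h
  exact_mod_cast h

section Field

variable {K : Type*} [Field K] {ζ : K} (hζ : IsPrimitiveRoot ζ p)
include hζ

lemma inv_pow_eq_pow_sub_of_isPrimitiveRoot {k : ℕ} (hk : k ≤ p) : ζ⁻¹ ^ k = ζ ^ (p - k) := by
  rw [pow_sub₀ ζ (hζ.ne_zero (NeZero.ne p)) hk, hζ.pow_eq_one, one_mul, inv_pow]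

lemma gaussProd_sq (hp : p ≠ 2) : gaussProd p ζ ^ 2 = (-1) ^ (p / 2) * p := by
  have hp_eq : 2 * (p / 2) + 1 = p :=
    Nat.two_mul_div_two_add_one_of_odd ((Fact.out : p.Prime).odd_of_ne_two hp)
  have hζ0 : ζ ≠ 0 := hζ.ne_zero (NeZero.ne p)
  have hη : IsPrimitiveRoot (ζ ^ 2) (2 * (p / 2) + 1) := by
    rw [hp_eq]
    exact hζ.pow_of_coprime 2 ((Nat.coprime_primes Nat.prime_two Fact.out).mpr hp.symm)
  have hfactor : ∀ k ∈ Finset.range (p / 2),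
      (ζ ^ (2 * k + 1) - ζ⁻¹ ^ (2 * k + 1)) ^ 2
        = -1 * ((1 - (ζ ^ 2) ^ (2 * k + 1)) * (1 - (ζ ^ 2) ^ (p - (2 * k + 1)))) := fun k hk => by
    have hk := Finset.mem_range.mp hk
    have hmul : ζ ^ (2 * k + 1) * ζ⁻¹ ^ (2 * k + 1) = 1 := by
      rw [← mul_pow, mul_inv_cancel₀ hζ0, one_pow]
    rw [pow_right_comm, pow_right_comm ζ 2,
      ← inv_pow_eq_pow_sub_of_isPrimitiveRoot hζ (k := 2 * k + 1) (by omega)]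
    linear_combination (ζ ^ (2 * k + 1) * ζ⁻¹ ^ (2 * k + 1) - 1) * hmul
  calc gaussProd p ζ ^ 2
      = (-1) ^ (p / 2) * ∏ k ∈ Finset.range (p / 2),
          (1 - (ζ ^ 2) ^ (2 * k + 1)) * (1 - (ζ ^ 2) ^ (p - (2 * k + 1))) := by
        rw [gaussProd, ← Finset.prod_pow, Finset.prod_congr rfl hfactor, Finset.prod_mul_distrib,
          Finset.prod_const, Finset.card_range]
    _ = (-1) ^ (p / 2) * ∏ i ∈ Finset.range (2 * (p / 2)), (1 - (ζ ^ 2) ^ (i + 1)) := by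
        rw [prod_range_two_mul_eq_prod_odd_mul_reflect (fun i => 1 - (ζ ^ 2) ^ i), hp_eq]
    _ = (-1) ^ (p / 2) * p := by
        rw [hη.prod_one_sub_pow_eq_order, ← Nat.cast_add_one, hp_eq]

variable [CharZero K]

lemma gaussSum_legendreChar_sq (hp : p ≠ 2) :
    gaussSum (legendreChar p K) (AddChar.zmodChar p hζ.pow_eq_one) ^ 2 = (-1) ^ (p / 2) * p := by
  rw [gaussSum_sq (χ := legendreChar p K) (legendreChar_ne_one hp) (legendreChar_isQuadratic K)
    (AddChar.zmodChar_primitive_of_primitive_root p hζ), ZMod.card, legendreChar_neg_one hp]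

/- Compare both sides in `ℤ[ζ] / (p, (ζ - 1) ^ (p - 1)) = 𝔽_p[X] / (X - 1) ^ (p - 1)`, where Euler's
criterion turns the Legendre symbol into a power. At order `(X - 1) ^ (p / 2)` the coefficients of
the Gauss sum and of the product both become `-1` when multiplied by `(p / 2)!`. -/
open Polynomial in
lemma intCast_eq_one_of_gaussSum_eq_mul_gaussProd (hp : p ≠ 2) {ε : ℤ}
    (h : gaussSum (legendreChar p K) (AddChar.zmodChar p hζ.pow_eq_one) = ε * gaussProd p ζ) :
    (ε : ZMod p) = 1 := by
  have hp3 : 3 ≤ p := by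
    have := (Fact.out : p.Prime).two_le
    omega
  set S : ℤ[X] := ∑ x : ZMod p, C (quadraticChar (ZMod p) x) * X ^ x.val with hS
  set P : ℤ[X] := ∏ k ∈ Finset.range (p / 2), (X ^ (2 * k + 1) - X ^ (p - (2 * k + 1))) with hP
  have hζS : aeval ζ S = gaussSum (legendreChar p K) (AddChar.zmodChar p hζ.pow_eq_one) := by
    simp [hS, gaussSum, legendreChar, AddChar.zmodChar_apply]
  have hζP : aeval ζ P = gaussProd p ζ := by
    simp only [hP, gaussProd, map_prod, map_sub, map_pow, aeval_X]
    refine Finset.prod_congr rfl fun k hk => ?_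
    have hk := Finset.mem_range.mp hk
    rw [inv_pow_eq_pow_sub_of_isPrimitiveRoot hζ (by omega)]
  have hcoeff := coeff_taylor_one_map_eq_zero_of_aeval_eq_zero hζ (f := S - C ε * P) (k := p / 2)
    (by simp [hζS, hζP, h]) (by omega)
  have hSmod : S.map (Int.castRingHom (ZMod p)) = ∑ x : ZMod p, C (x ^ (p / 2)) * X ^ x.val := by
    have heuler : ∀ x : ZMod p, Int.castRingHom (ZMod p) (quadraticChar (ZMod p) x) = x ^ (p / 2) :=
      fun x => by
        rw [eq_intCast, quadraticChar_eq_pow_of_char_ne_two' (by rwa [ZMod.ringChar_zmod_n]),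
          ZMod.card]
    simp only [hS, Polynomial.map_sum, Polynomial.map_mul, Polynomial.map_pow, map_C, map_X,
      heuler]
  have hPmod : (taylor 1 (P.map (Int.castRingHom (ZMod p)))).coeff (p / 2)
      = ∏ k ∈ Finset.range (p / 2), (((2 * k + 1 : ℕ) : ZMod p) - (p - (2 * k + 1) : ℕ)) := by
    simpa [hP, Polynomial.map_prod] using coeff_card_taylor_one_prod_X_pow_sub_X_pow (R := ZMod p)
      (Finset.range (p / 2)) (fun k => 2 * k + 1) (fun k => p - (2 * k + 1))
  rw [Polynomial.map_sub, Polynomial.map_mul, map_C, map_sub, taylor_mul, taylor_C, coeff_sub,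
    coeff_C_mul, hSmod, hPmod, eq_intCast] at hcoeff
  linear_combination ((p / 2).factorial : ZMod p) * hcoeff
    - factorial_mul_coeff_taylor_one_sum_pow_half hp + ε * factorial_mul_prod_range_half hp

theorem gaussSum_legendreChar_eq_gaussProd (hp : p ≠ 2) :
    gaussSum (legendreChar p K) (AddChar.zmodChar p hζ.pow_eq_one) = gaussProd p ζ := by
  have hsq := (gaussSum_legendreChar_sq hζ hp).trans (gaussProd_sq hζ hp).symm
  refine (sq_eq_sq_iff_eq_or_eq_neg.mp hsq).resolve_right fun hneg => ?_
  have hone := intCast_eq_one_of_gaussSum_eq_mul_gaussProd hζ hp (ε := -1) (by simpa using hneg)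
  have : Fact (2 < p) := ⟨(Fact.out : p.Prime).two_le.lt_of_ne' hp⟩
  exact ZMod.neg_one_ne_one (by simpa using hone)

end Field
section Complex

lemma exp_mul_I_pow_sub_inv_pow (x : ℝ) (j : ℕ) :
    exp (x * I) ^ j - (exp (x * I))⁻¹ ^ j = 2 * I * Real.sin (j * x) := by
  rw [← exp_neg, ← exp_nat_mul, ← exp_nat_mul, ofReal_sin, sin]
  push_cast
  simp only [neg_mul, mul_neg, mul_assoc]
  linear_combination (exp (j * (x * I)) - exp (-(j * (x * I)))) * I_mul_I

lemma gaussProd_exp_mul_I_of_half_eq_two_mul {n r : ℕ} (hr : n / 2 = 2 * r) (x : ℝ) :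
    gaussProd n (exp (x * I)) = (∏ k ∈ Finset.range r, 2 * Real.sin ((2 * k + 1 : ℕ) * x)
      * -(2 * Real.sin ((2 * (r + k) + 1 : ℕ) * x)) : ℝ) := by
  simp only [gaussProd, exp_mul_I_pow_sub_inv_pow]
  rw [hr, two_mul, Finset.prod_range_add, ← Finset.prod_mul_distrib, ofReal_prod]
  refine Finset.prod_congr rfl fun k _ => ?_
  push_cast
  linear_combination
    4 * sin ((2 * k + 1) * x) * sin ((2 * (r + k) + 1) * x) * I_mul_I

lemma sin_natCast_mul_two_pi_div_pos {n j : ℕ} (hj : 0 < j) (hjn : 2 * j < n) :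
    0 < Real.sin (j * (2 * Real.pi / n)) := by
  have hn : (0 : ℝ) < n := Nat.cast_pos.mpr (by omega)
  have hlt : 2 * (j : ℝ) < n := by exact_mod_cast hjn
  refine Real.sin_pos_of_pos_of_lt_pi (by positivity) ?_
  rw [← mul_div_assoc, div_lt_iff₀ hn]
  nlinarith [Real.pi_pos]

lemma sin_natCast_mul_two_pi_div_neg {n j : ℕ} (hj : n < 2 * j) (hjn : j < n) :
    Real.sin (j * (2 * Real.pi / n)) < 0 := by
  have hn : (n : ℝ) ≠ 0 := Nat.cast_ne_zero.mpr (by omega)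
  have hreflect : ((n - j : ℕ) : ℝ) * (2 * Real.pi / n) = 2 * Real.pi - j * (2 * Real.pi / n) := by
    rw [Nat.cast_sub hjn.le]
    field_simp
  have hpos := sin_natCast_mul_two_pi_div_pos (n := n) (j := n - j) (by omega) (by omega)
  rw [hreflect, Real.sin_two_pi_sub] at hpos
  exact neg_pos.mp hpos

lemma exists_pos_gaussProd_exp_eq {n : ℕ} (hn : n % 4 = 1) :
    ∃ s : ℝ, 0 < s ∧ gaussProd n (exp (2 * Real.pi * I / n)) = s := by
  have hangle : 2 * Real.pi * I / n = (2 * Real.pi / n : ℝ) * I := by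
    push_cast
    ring
  rw [hangle, gaussProd_exp_mul_I_of_half_eq_two_mul (r := n / 4) (by omega)]
  refine ⟨_, Finset.prod_pos fun k hk => ?_, rfl⟩
  have hk := Finset.mem_range.mp hk
  have hfirst := sin_natCast_mul_two_pi_div_pos (n := n) (j := 2 * k + 1) (by omega) (by omega)
  have hsecond := sin_natCast_mul_two_pi_div_neg (n := n) (j := 2 * (n / 4 + k) + 1)
    (by omega) (by omega)
  exact mul_pos (by linarith) (by linarith)

theorem gaussSum_legendreChar_stdAddChar {p : ℕ} [Fact p.Prime] (hp : p % 4 = 1) :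
    gaussSum (legendreChar p ℂ) ZMod.stdAddChar = Real.sqrt p := by
  have hp2 : p ≠ 2 := by omega
  have hζ := isPrimitiveRoot_exp p (NeZero.ne p)
  have hψ : ZMod.stdAddChar = AddChar.zmodChar p hζ.pow_eq_one := by
    ext x
    have hx := ZMod.stdAddChar_coe (N := p) x.val
    rw [Int.cast_natCast, ZMod.natCast_zmod_val] at hx
    rw [hx, AddChar.zmodChar_apply, ← exp_nat_mul]
    push_cast
    ring_nf
  obtain ⟨s, hs, hprod⟩ := exists_pos_gaussProd_exp_eq hp
  have hsq : s ^ 2 = p := by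
    have h := gaussProd_sq hζ hp2
    rw [hprod, Even.neg_one_pow (by grind), one_mul] at h
    exact_mod_cast h
  rw [hψ, gaussSum_legendreChar_eq_gaussProd hζ hp2, hprod, ← hsq, Real.sqrt_sq hs.le]

end Complex

end GaussSum

section ResidueSums

/-- The nonzero squares of a finite field, encoded as the elements of quadratic character `1`. -/
def nonzeroSquares (F : Type*) [Field F] [Fintype F] [DecidableEq F] : Finset F :=
  {x | quadraticChar F x = 1}

lemma two_mul_sum_nonzeroSquares {F R : Type*} [Field F] [Fintype F] [DecidableEq F] [CommRing R]
    (f : F → R) :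
    2 * ∑ x ∈ nonzeroSquares F, f x = ∑ x, (quadraticChar F x : R) * f x + ∑ x, f x - f 0 := by
  have hindicator : ∀ x, 2 * (if quadraticChar F x = 1 then f x else 0)
      = (quadraticChar F x : R) * f x + f x - if x = 0 then f x else 0 := fun x => by
    by_cases hx : x = 0
    · simp [hx]
    · rcases quadraticChar_dichotomy hx with h | h
      · rw [h, if_pos rfl, if_neg hx, Int.cast_one]
        ring
      · simp [h, hx]
  rw [nonzeroSquares, Finset.sum_filter, Finset.mul_sum,
    Finset.sum_congr rfl fun x _ => hindicator x, Finset.sum_sub_distrib, Finset.sum_add_distrib,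
    Finset.sum_ite_eq' Finset.univ 0, if_pos (Finset.mem_univ 0)]

lemma two_mul_card_nonzeroSquares_add_one {F : Type*} [Field F] [Fintype F] [DecidableEq F]
    (hF : ringChar F ≠ 2) : 2 * (nonzeroSquares F).card + 1 = Fintype.card F := by
  have h := two_mul_sum_nonzeroSquares (F := F) (fun _ => (1 : ℤ))
  simp only [mul_one, Int.cast_id, quadraticChar_sum_zero hF, Finset.sum_const, nsmul_eq_mul,
    Finset.card_univ] at h
  omega

lemma sum_nonzeroSquares_stdAddChar {p : ℕ} [Fact p.Prime] (hp : p % 4 = 1) {k : ZMod p}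
    (hk : k ≠ 0) :
    ∑ x ∈ nonzeroSquares (ZMod p), ZMod.stdAddChar (k * x)
      = (legendreChar p ℂ k * Real.sqrt p - 1) / 2 := by
  have hgauss : ∑ x, legendreChar p ℂ x * ZMod.stdAddChar (k * x)
      = legendreChar p ℂ k * Real.sqrt p := by
    have h := gaussSum_mulShift_eq (legendreChar p ℂ) ZMod.stdAddChar (Units.mk0 k hk)
    rw [gaussSum_legendreChar_stdAddChar hp, (legendreChar_isQuadratic ℂ).inv] at h
    exact h
  have hsum : ∑ x, ZMod.stdAddChar (k * x) = (0 : ℂ) := by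
    simpa [mul_comm, hk] using AddChar.sum_mulShift k (ZMod.isPrimitive_stdAddChar p)
  have htwo : 2 * ∑ x ∈ nonzeroSquares (ZMod p), (ZMod.stdAddChar (k * x) : ℂ)
      = ∑ x, legendreChar p ℂ x * ZMod.stdAddChar (k * x) + ∑ x, ZMod.stdAddChar (k * x)
        - ZMod.stdAddChar (k * 0) := two_mul_sum_nonzeroSquares _
  rw [hgauss, hsum, mul_zero, AddChar.map_zero_eq_one] at htwo
  linear_combination htwo / 2

lemma val_image_nonzeroSquares (p : ℕ) [Fact p.Prime] :
    ZMod.val '' (nonzeroSquares (ZMod p) : Set (ZMod p))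
      = {q : ℕ | 0 < q ∧ q < p ∧ ∃ t : ZMod p, t ^ 2 = (q : ZMod p)} := by
  have hmem : ∀ x : ZMod p, x ∈ nonzeroSquares (ZMod p) ↔ x ≠ 0 ∧ ∃ t, t ^ 2 = x := fun x => by
    by_cases hx : x = 0
    · simp [nonzeroSquares, hx]
    · rw [nonzeroSquares, Finset.mem_filter_univ, quadraticChar_one_iff_isSquare hx,
        isSquare_iff_exists_sq]
      simp only [ne_eq, hx, not_false_eq_true, true_and, eq_comm]
  ext q
  constructor
  · rintro ⟨x, hx, rfl⟩
    obtain ⟨hx0, hsq⟩ := (hmem x).mp hx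
    exact ⟨ZMod.val_pos.mpr hx0, x.val_lt, by rwa [ZMod.natCast_zmod_val]⟩
  · rintro ⟨hq0, hqp, hsq⟩
    have hne : (q : ZMod p) ≠ 0 := fun h =>
      Nat.not_dvd_of_pos_of_lt hq0 hqp ((ZMod.natCast_eq_zero_iff q p).mp h)
    exact ⟨q, (hmem q).mpr ⟨hne, hsq⟩, ZMod.val_cast_of_lt hqp⟩

end ResidueSums

section Supercharacter

lemma finsum_mem_image_union_image_of_ncard {ι κ α M : Type*} [AddCommMonoid M] {s : Finset ι}
    {t : Finset κ} {f : ι → α} {g : κ → α} (hcard : (f '' s ∪ g '' t).ncard = s.card + t.card)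
    (h : α → M) :
    ∑ᶠ x ∈ f '' s ∪ g '' t, h x = ∑ i ∈ s, h (f i) + ∑ j ∈ t, h (g j) := by
  classical
  have himage : f '' s ∪ g '' t = ((s.disjSum t).image (Sum.elim f g) : Finset α) := by
    ext x
    simp
  have hinj : Set.InjOn (Sum.elim f g) (s.disjSum t : Finset (ι ⊕ κ)) := by
    rw [himage, Set.ncard_coe_finset, ← Finset.card_disjSum] at hcard
    exact Finset.card_image_iff.mp hcard
  rw [himage, finsum_mem_coe_finset, Finset.sum_image hinj, Finset.sum_disjSum]
  simp only [Sum.elim_inl, Sum.elim_inr]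

lemma superchar_eq_finsum_stdAddChar {n : ℕ} [NeZero n] (X : Set (ZMod n)) (y : ZMod n) :
    superchar n X y = ∑ᶠ x ∈ X, ZMod.stdAddChar (x * y) := by
  have he2 : ∀ x : ZMod n,
      e2 (((x.val * y.val : ℕ) : ℝ) / (n : ℝ)) = ZMod.stdAddChar (x * y) := fun x => by
    have h := ZMod.stdAddChar_coe (N := n) ((x.val * y.val : ℕ) : ℤ)
    rw [Int.cast_natCast, Nat.cast_mul, ZMod.natCast_zmod_val, ZMod.natCast_zmod_val] at h
    rw [h, e2]
    push_cast
    ring_nf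
  simp only [superchar, he2]

variable {n p : ℕ}

lemma stdAddChar_intCast_mul_natCast_div [NeZero n] [NeZero p] (hpn : p ∣ n) (k : ℤ) :
    ZMod.stdAddChar ((k : ZMod n) * ((n / p : ℕ) : ZMod n)) = ZMod.stdAddChar (k : ZMod p) := by
  have hp : (p : ℂ) ≠ 0 := NeZero.ne _
  have hn : (n : ℂ) ≠ 0 := NeZero.ne _
  rw [← Int.cast_natCast (n / p), ← Int.cast_mul, ZMod.stdAddChar_coe, ZMod.stdAddChar_coe,
    Int.cast_mul, Int.cast_natCast, Nat.cast_div hpn hp]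
  congr 1
  field_simp

lemma stdAddChar_intCast_mul_stdAddChar_intCast [NeZero n] [NeZero p] (k l : ℤ) :
    (ZMod.stdAddChar (k : ZMod p) * ZMod.stdAddChar (l : ZMod n) : ℂ)
      = exp ((2 * Real.pi * ((k * n + l * p : ℤ) / (p * n)) : ℝ) * I) := by
  have hp : (p : ℂ) ≠ 0 := NeZero.ne _
  have hn : (n : ℂ) ≠ 0 := NeZero.ne _
  rw [ZMod.stdAddChar_coe, ZMod.stdAddChar_coe, ← exp_add]
  push_cast
  congr 1
  field_simp

variable [Fact p.Prime]

/-- The set `{(aq + b)(n/p) + s : q a nonzero square modulo p}` in `ℤ/nℤ`. The set `X` of the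
theorem is the union of two of these, with parameters `(a, b, 1)` and `(c, -b, -1)`. -/
def squareProgression (n p : ℕ) [Fact p.Prime] (a b s : ℤ) : Set (ZMod n) :=
  (fun x : ZMod p => ((a * x.val + b : ℤ) : ZMod n) * ((n / p : ℕ) : ZMod n) + s)
    '' nonzeroSquares (ZMod p)

lemma ne_zero_of_two_lt_ncard_squareProgression_union {a b s a' b' s' : ℤ}
    (h : 2 < (squareProgression n p a b s ∪ squareProgression n p a' b' s').ncard) : n ≠ 0 := by
  intro hn
  have hdiv : ((n / p : ℕ) : ZMod n) = 0 := by rw [hn, Nat.zero_div, Nat.cast_zero]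
  have hcard : ∀ a b s : ℤ, (squareProgression n p a b s).ncard ≤ 1 := fun a b s => by
    have hsub : squareProgression n p a b s ⊆ {(s : ZMod n)} := by
      rintro _ ⟨x, -, rfl⟩
      simp [hdiv]
    exact (Set.ncard_le_ncard hsub (Set.finite_singleton _)).trans_eq (Set.ncard_singleton _)
  exact h.not_ge ((Set.ncard_union_le _ _).trans (add_le_add (hcard a b s) (hcard a' b' s')))

lemma intCast_mul_natCast_ne_zero {k : ℤ} {m : ℕ} (hk : ¬ (p : ℤ) ∣ k) (hm : ¬ p ∣ m) :
    ((k * m : ℤ) : ZMod p) ≠ 0 := by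
  rw [← ZMod.intCast_zmod_eq_zero_iff_dvd] at hk
  rw [← ZMod.natCast_eq_zero_iff] at hm
  rw [Int.cast_mul, Int.cast_natCast]
  exact mul_ne_zero hk hm

lemma sum_stdAddChar_squareProgression [NeZero n] (hp : p % 4 = 1) (hpn : p ∣ n) (a b s : ℤ)
    {y : ZMod n} (hay : ((a * y.val : ℤ) : ZMod p) ≠ 0) :
    ∑ x ∈ nonzeroSquares (ZMod p), ZMod.stdAddChar
        ((((a * x.val + b : ℤ) : ZMod n) * ((n / p : ℕ) : ZMod n) + (s : ZMod n)) * y)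
      = (legendreSym p (a * y.val) * Real.sqrt p - 1) / 2
        * exp ((2 * Real.pi * (((b * n + s * p : ℤ) : ℝ) * y.val / (p * n)) : ℝ) * I) := by
  have hphase := stdAddChar_intCast_mul_stdAddChar_intCast (n := n) (p := p)
    (b * y.val) (s * y.val)
  have hterm : ∀ x : ZMod p, (ZMod.stdAddChar
      ((((a * x.val + b : ℤ) : ZMod n) * ((n / p : ℕ) : ZMod n) + (s : ZMod n)) * y) : ℂ)
      = ZMod.stdAddChar (((a * y.val : ℤ) : ZMod p) * x)
        * (ZMod.stdAddChar ((b * y.val : ℤ) : ZMod p)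
          * ZMod.stdAddChar ((s * y.val : ℤ) : ZMod n)) := fun x => by
    have hsplit : (((a * x.val + b : ℤ) : ZMod n) * ((n / p : ℕ) : ZMod n) + (s : ZMod n)) * y
        = ((a * y.val * x.val + b * y.val : ℤ) : ZMod n) * ((n / p : ℕ) : ZMod n)
          + ((s * y.val : ℤ) : ZMod n) := by
      push_cast [ZMod.natCast_zmod_val]
      ring
    rw [hsplit, AddChar.map_add_eq_mul, stdAddChar_intCast_mul_natCast_div hpn, Int.cast_add,
      AddChar.map_add_eq_mul, Int.cast_mul _ (x.val : ℤ), Int.cast_natCast x.val,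
      ZMod.natCast_zmod_val, mul_assoc]
  rw [Finset.sum_congr rfl fun x _ => hterm x, ← Finset.sum_mul,
    sum_nonzeroSquares_stdAddChar hp hay, legendreChar_intCast, hphase]
  push_cast
  ring_nf

theorem superchar_squareProgression_union [NeZero n] (hp : p % 4 = 1) (hpn : p ∣ n) {a c : ℤ}
    (b : ℤ) (ha : ¬ (p : ℤ) ∣ a) (hleg : legendreSym p a = -legendreSym p c)
    (hcard : (squareProgression n p a b 1 ∪ squareProgression n p c (-b) (-1)).ncard = p - 1)
    {y : ZMod n} (hy : ¬ p ∣ y.val) {θ : ℝ}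
    (hθ : θ = 2 * Real.pi * (((b * n + p : ℤ) : ℝ) * y.val / (p * n))) :
    superchar n (squareProgression n p a b 1 ∪ squareProgression n p c (-b) (-1)) y
      = legendreSym p (a * y.val) * I * Real.sqrt p * (Real.sin θ : ℝ) - (Real.cos θ : ℝ) := by
  have hc : ¬ (p : ℤ) ∣ c := by
    rwa [← ZMod.intCast_zmod_eq_zero_iff_dvd, ← legendreSym.eq_zero_iff, ← neg_eq_zero, ← hleg,
      legendreSym.eq_zero_iff, ZMod.intCast_zmod_eq_zero_iff_dvd]
  have hsymbol : legendreSym p (c * y.val) = -legendreSym p (a * y.val) := by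
    rw [legendreSym.mul, legendreSym.mul, hleg, neg_mul, neg_neg]
  have hcard' : (squareProgression n p a b 1 ∪ squareProgression n p c (-b) (-1)).ncard
      = (nonzeroSquares (ZMod p)).card + (nonzeroSquares (ZMod p)).card := by
    have h := two_mul_card_nonzeroSquares_add_one (F := ZMod p)
      (by rw [ZMod.ringChar_zmod_n]; omega)
    rw [ZMod.card] at h
    omega
  have hneg : 2 * Real.pi * (((-b * n + -1 * p : ℤ) : ℝ) * y.val / (p * n)) = -θ := by
    rw [hθ]
    push_cast
    ring
  rw [superchar_eq_finsum_stdAddChar, squareProgression, squareProgression,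
    finsum_mem_image_union_image_of_ncard hcard',
    sum_stdAddChar_squareProgression hp hpn a b 1
      (intCast_mul_natCast_ne_zero ha hy),
    sum_stdAddChar_squareProgression hp hpn c (-b) (-1)
      (intCast_mul_natCast_ne_zero hc hy), hsymbol, hneg, one_mul, ← hθ,
    ofReal_sin, ofReal_cos, sin, cos]
  push_cast
  linear_combination (legendreSym p (a * y.val) * Real.sqrt p * (exp (θ * I) - exp (-θ * I)) / 2)
    * I_mul_I

lemma re_sq_add_im_sq_div_eq_one {ε : ℤ} (hε : ε ^ 2 = 1) {t θ : ℝ} (ht : 0 < t) {z : ℂ}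
    (hz : z = ε * I * Real.sqrt t * (Real.sin θ : ℝ) - (Real.cos θ : ℝ)) :
    z.re ^ 2 + z.im ^ 2 / t = 1 := by
  have hre : z.re = -Real.cos θ := by simp [hz, -ofReal_sin, -ofReal_cos]
  have him : z.im = ε * Real.sqrt t * Real.sin θ := by simp [hz, -ofReal_sin, -ofReal_cos]
  have hεreal : (ε : ℝ) ^ 2 = 1 := by exact_mod_cast hε
  rw [hre, him, mul_pow, mul_pow, hεreal, Real.sq_sqrt ht.le, one_mul,
    mul_div_cancel_left₀ _ ht.ne', neg_sq, Real.cos_sq_add_sin_sq]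

end Supercharacter

theorem stmt13 (n p : ℕ) [hp : Fact p.Prime] (hp4 : p % 4 = 1) (hpn : p ∣ n)
    (Qp : Set ℕ) (hQp : Qp = {q : ℕ | 0 < q ∧ q < p ∧ ∃ t : ZMod p, t ^ 2 = (q : ZMod p)})
    (a b c : ℤ) (hap : ¬ (p : ℤ) ∣ a) (hbp : ¬ (p : ℤ) ∣ b) (hcp : ¬ (p : ℤ) ∣ c)
    (hleg : legendreSym p a = - legendreSym p c)
    (X : Set (ZMod n))
    (hX : X = (fun q : ℕ => ((a * q + b : ℤ) : ZMod n) * ((n / p : ℕ) : ZMod n) + 1) '' Qp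
        ∪ (fun q : ℕ => ((c * q - b : ℤ) : ZMod n) * ((n / p : ℕ) : ZMod n) - 1) '' Qp)
    (hdist : X.ncard = p - 1)
    (y : ZMod n) (hy : ¬ p ∣ y.val) :
    superchar n X y
      = (legendreSym p (a * y.val) : ℂ) * Complex.I * (Real.sqrt p : ℂ) *
          ((Real.sin (2 * Real.pi * (((b * n + p : ℤ) : ℝ) * (y.val : ℝ) / ((p : ℝ) * n))) : ℝ) : ℂ)
        - ((Real.cos (2 * Real.pi * (((b * n + p : ℤ) : ℝ) * (y.val : ℝ) / ((p : ℝ) * n))) : ℝ) : ℂ)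
    ∧ (superchar n X y).re ^ 2 + (superchar n X y).im ^ 2 / p = 1 := by
  have hX' : X = squareProgression n p a b 1 ∪ squareProgression n p c (-b) (-1) := by
    rw [hX, hQp, ← val_image_nonzeroSquares, squareProgression, squareProgression,
      Set.image_image, Set.image_image]
    simp only [Int.cast_one, Int.cast_neg, sub_eq_add_neg]
  rw [hX'] at hdist ⊢
  have hp2 := hp.out.two_le
  have hn : NeZero n := ⟨ne_zero_of_two_lt_ncard_squareProgression_union
    ((show 2 < p - 1 by omega).trans_eq hdist.symm)⟩
  have hσ := superchar_squareProgression_union hp4 hpn b hap hleg hdist hy rfl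
  exact ⟨hσ, re_sq_add_im_sq_div_eq_one
    (legendreSym.sq_one p (intCast_mul_natCast_ne_zero hap hy)) (Nat.cast_pos.mpr hp.out.pos) hσ⟩
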